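/- Let x, xb, xne, xnw, xse, xsw, d, ne, nw, se, sw be real numbers each of absolute value strictly less than 1, and let M be the 11×11 real matrix whose nonzero entries are (using 1-based indexing): M[1,2]=1, M[1,3]=2, M[1,4]=1; M[2,2]=x, M[2,3]=xb, M[2,8]=xne, M[2,9]=xnw, M[2,10]=xse, M[2,11]=xsw; M[3,5]=1; M[4,3]=1, M[4,4]=d; M[5,6]=1; M[6,7]=1; M[8,8]=ne; M[9,9]=nw; M[10,10]=se; M[11,11]=sw (row 7 is identically zero). Then the matrix powers M^k converge to the zero matrix (entrywise) as k → ∞. -/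

import Mathlib

open Filter Topology

/-- A scalar linear recursion with contraction factor `a` and a forcing term tending to `0`
has all its solutions tending to `0`. -/
theorem tendsto_zero_of_succ_eq_mul_add {a : ℝ} (ha : |a| < 1) {u v : ℕ → ℝ}
    (huv : ∀ k, u (k + 1) = a * u k + v k) (hv : Tendsto v atTop (𝓝 0)) :
    Tendsto u atTop (𝓝 0) := by
  rw [Metric.tendsto_atTop]
  intro ε hε
  have hδ : 0 < (1 - |a|) * (ε / 2) := mul_pos (by linarith) (by linarith)
  obtain ⟨N, hN⟩ := Metric.tendsto_atTop.1 hv _ hδ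
  have hbound : ∀ m, |u (N + m)| ≤ |a| ^ m * |u N| + ε / 2 := by
    intro m
    induction m with
    | zero => simpa using (half_pos hε).le
    | succ m ih =>
      have hvm : |v (N + m)| < (1 - |a|) * (ε / 2) := by
        simpa [Real.dist_eq] using hN (N + m) (by omega)
      calc |u (N + (m + 1))| = |a * u (N + m) + v (N + m)| := by rw [← add_assoc, huv]
        _ ≤ |a| * |u (N + m)| + |v (N + m)| := by
          rw [← abs_mul]; exact abs_add_le _ _
        _ ≤ |a| * (|a| ^ m * |u N| + ε / 2) + (1 - |a|) * (ε / 2) := by gcongr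
        _ = |a| ^ (m + 1) * |u N| + ε / 2 := by ring
  have hpow : Tendsto (fun m : ℕ => |a| ^ m * |u N|) atTop (𝓝 0) := by
    simpa using (tendsto_pow_atTop_nhds_zero_of_lt_one (abs_nonneg a) ha).mul_const |u N|
  obtain ⟨K, hK⟩ := eventually_atTop.1 (hpow.eventually_lt_const (half_pos hε))
  refine ⟨N + K, fun n hn => ?_⟩
  obtain ⟨m, rfl⟩ := Nat.exists_eq_add_of_le (show N ≤ n by omega)
  rw [Real.dist_eq, sub_zero]
  linarith [hbound m, hK m (by omega)]

/-- The powers of a real matrix that is triangular for some ordering of its indices tend to `0`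
as soon as its diagonal entries have absolute value less than `1`. -/
theorem Matrix.BlockTriangular.tendsto_pow_zero {n α : Type*} [Fintype n] [DecidableEq n]
    [LinearOrder α] [WellFoundedGT α] {M : Matrix n n ℝ} {b : n → α}
    (hM : M.BlockTriangular b) (hb : Function.Injective b) (hdiag : ∀ i, |M i i| < 1) :
    Tendsto (fun k : ℕ => M ^ k) atTop (𝓝 0) := by
  refine tendsto_pi_nhds.2 fun i => tendsto_pi_nhds.2 fun j => ?_
  induction i using (InvImage.wf b (wellFounded_gt (α := α))).induction with
  | _ i ih =>
    refine tendsto_zero_of_succ_eq_mul_add (hdiag i)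
      (v := fun k => ∑ l ∈ Finset.univ.erase i, M i l * (M ^ k) l j) (fun k => ?_) ?_
    · rw [pow_succ', Matrix.mul_apply]
      exact (Finset.add_sum_erase _ (fun l => M i l * (M ^ k) l j) (Finset.mem_univ i)).symm
    · rw [← Finset.sum_const_zero (s := Finset.univ.erase i)]
      refine tendsto_finsetSum _ fun l hl => ?_
      rcases lt_or_gt_of_ne (hb.ne (Finset.ne_of_mem_erase hl)) with h | h
      · simp [hM h]
      · simpa using (ih l h).const_mul (M i l)

theorem pow_tendsto_zero_of_asym_search_mean_matrix
    (x xb xne xnw xse xsw d ne nw se sw : ℝ)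
    (hx : |x| < 1) (hxb : |xb| < 1) (hxne : |xne| < 1) (hxnw : |xnw| < 1)
    (hxse : |xse| < 1) (hxsw : |xsw| < 1) (hd : |d| < 1) (hne : |ne| < 1)
    (hnw : |nw| < 1) (hse : |se| < 1) (hsw : |sw| < 1) :
    Filter.Tendsto
      (fun k : ℕ =>
        (Matrix.of
          ![![0, 1, 2, 1, 0, 0, 0, 0, 0, 0, 0],
            ![0, x, xb, 0, 0, 0, 0, xne, xnw, xse, xsw],
            ![0, 0, 0, 0, 1, 0, 0, 0, 0, 0, 0],
            ![0, 0, 1, d, 0, 0, 0, 0, 0, 0, 0],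
            ![0, 0, 0, 0, 0, 1, 0, 0, 0, 0, 0],
            ![0, 0, 0, 0, 0, 0, 1, 0, 0, 0, 0],
            ![0, 0, 0, 0, 0, 0, 0, 0, 0, 0, 0],
            ![0, 0, 0, 0, 0, 0, 0, ne, 0, 0, 0],
            ![0, 0, 0, 0, 0, 0, 0, 0, nw, 0, 0],
            ![0, 0, 0, 0, 0, 0, 0, 0, 0, se, 0],
            ![0, 0, 0, 0, 0, 0, 0, 0, 0, 0, sw]] :
          Matrix (Fin 11) (Fin 11) ℝ) ^ k)
      Filter.atTop (nhds 0) := by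
  refine Matrix.BlockTriangular.tendsto_pow_zero (b := Equiv.swap (2 : Fin 11) 3) ?_
    (Equiv.injective _) ?_
  · intro i j hij
    fin_cases i <;> fin_cases j <;> first | rfl | exact absurd hij (by decide)
  · intro i
    fin_cases i <;> simp [hx, hd, hne, hnw, hse, hsw]
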